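/- arXiv:1806.10976 — 4 statements merged into one kernel-verified Lean document; each statement's English description precedes it below -/
import Mathlib

section
/- Let R ≥ 1 and for each i = 1,…,R let Ψ_i be a complex L_i × K_i matrix. Define the R-fold Kronecker product Ψ = Ψ_1 ⊗ ⋯ ⊗ Ψ_R as the matrix indexed by rows (j_1,…,j_R) ∈ ∏_i {1,…,L_i} and columns (k_1,…,k_R) ∈ ∏_i {1,…,K_i} with entry ∏_{i=1}^R (Ψ_i)_{j_i,k_i}. Then the frame potential factorizes: FP(Ψ_1 ⊗ ⋯ ⊗ Ψ_R) = ∏_{i=1}^R FP(Ψ_i). -/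
open Matrix
open scoped BigOperators

/-- The frame potential of a complex matrix `Ψ`:
`FP(Ψ) = ‖ΨᴴΨ‖_F² = tr((ΨᴴΨ)ᴴ(ΨᴴΨ))`. -/
noncomputable def framePotential {m n : Type*} [Fintype m] [Fintype n]
    (Ψ : Matrix m n ℂ) : ℝ :=
  ∑ k, ∑ l, ‖(Ψᴴ * Ψ) k l‖ ^ 2

/-!
Forming the Gram matrix commutes with the Kronecker product, since conjugate transposition and
multiplication both act factor by factor. The entries of the Gram matrix are then products of
entries of the factors' Gram matrices, and distributivity factors the sum of their squared moduli.
-/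

/-- The Kronecker product of a finite family of matrices. It is indexed by dependent functions
rather than by iterated pairs, so that no order of the factors is chosen. -/
def piKronecker {ι α : Type*} {m n : ι → Type*} [Fintype ι] [CommMonoid α]
    (A : ∀ i, Matrix (m i) (n i) α) : Matrix (∀ i, m i) (∀ i, n i) α :=
  of fun j k => ∏ i, A i (j i) (k i)

section PiKronecker

variable {ι α : Type*} {l m n : ι → Type*} [Fintype ι]

theorem piKronecker_apply [CommMonoid α] (A : ∀ i, Matrix (m i) (n i) α)
    (j : ∀ i, m i) (k : ∀ i, n i) : piKronecker A j k = ∏ i, A i (j i) (k i) :=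
  rfl

theorem conjTranspose_piKronecker [CommMonoid α] [StarMul α] (A : ∀ i, Matrix (m i) (n i) α) :
    (piKronecker A)ᴴ = piKronecker fun i => (A i)ᴴ := by
  ext k j
  simp only [conjTranspose_apply, piKronecker_apply, star_prod]

theorem piKronecker_mul_piKronecker [DecidableEq ι] [∀ i, Fintype (m i)] [CommSemiring α]
    (A : ∀ i, Matrix (l i) (m i) α) (B : ∀ i, Matrix (m i) (n i) α) :
    piKronecker A * piKronecker B = piKronecker fun i => A i * B i := by
  ext j k
  simp only [mul_apply, piKronecker_apply, Fintype.prod_sum, Finset.prod_mul_distrib]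

theorem sum_norm_pow_piKronecker [DecidableEq ι] [∀ i, Fintype (m i)] [∀ i, Fintype (n i)]
    [NormedCommRing α] [NormOneClass α] [NormMulClass α] (A : ∀ i, Matrix (m i) (n i) α) (p : ℕ) :
    ∑ j, ∑ k, ‖piKronecker A j k‖ ^ p = ∏ i, ∑ j, ∑ k, ‖A i j k‖ ^ p := by
  simp only [piKronecker_apply, norm_prod, Finset.prod_pow, Fintype.prod_sum]

end PiKronecker

theorem framePotential_kronecker_general {ι : Type*} {m n : ι → Type*} [Fintype ι]
    [DecidableEq ι] [∀ i, Fintype (m i)] [∀ i, Fintype (n i)] (Ψ : ∀ i, Matrix (m i) (n i) ℂ) :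
    framePotential (piKronecker Ψ) = ∏ i, framePotential (Ψ i) := by
  have gram : (piKronecker Ψ)ᴴ * piKronecker Ψ = piKronecker fun i => (Ψ i)ᴴ * Ψ i := by
    rw [conjTranspose_piKronecker, piKronecker_mul_piKronecker]
  simp only [framePotential, gram, sum_norm_pow_piKronecker]

/-- The frame potential of an `R`-fold Kronecker product factorizes as the
product of the frame potentials of its factors. -/
theorem framePotential_kronecker (R : ℕ) (hR : 1 ≤ R) (L K : Fin R → ℕ)
    (Ψ : ∀ i : Fin R, Matrix (Fin (L i)) (Fin (K i)) ℂ) :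
    framePotential
      (Matrix.of fun (j : ∀ i, Fin (L i)) (k : ∀ i, Fin (K i)) =>
        ∏ i, Ψ i (j i) (k i)) = ∏ i, framePotential (Ψ i) :=
  framePotential_kronecker_general Ψ
end

section
/- Let U ∈ ℂ^{N×K} with rows u_1,…,u_N, and for a subset L ⊆ {1,…,N} define the frame potential set function F(L) = ∑_{j∈L} ∑_{l∈L} |⟨u_j, u_l⟩|². Then F is normalized (F(∅) = 0), monotone non-decreasing (F(X) ≤ F(X ∪ {x}) for all X ⊆ {1,…,N} and x), and supermodular, i.e., F(X ∪ {x}) − F(X) ≤ F(X ∪ {x,y}) − F(X ∪ {y}) for all X ⊆ {1,…,N} and distinct x, y ∉ X. -/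
open scoped BigOperators

/-- The frame potential set function of the rows of `U` indexed by `L`:
`F(L) = ∑_{j∈L} ∑_{l∈L} |⟨u_j, u_l⟩|²`. -/
noncomputable def frameSetFun {N K : ℕ} (U : Matrix (Fin N) (Fin K) ℂ)
    (L : Finset (Fin N)) : ℝ :=
  ∑ j ∈ L, ∑ l ∈ L, ‖∑ k, star (U j k) * U l k‖ ^ 2

/-!
The frame potential of `L` is the sum of a nonnegative weight over the square `L × L`. The squares
`X × X` and `Y × Y` both lie in `(X ∪ Y) × (X ∪ Y)` and meet exactly in `(X ∩ Y) × (X ∩ Y)`, so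
`F(X ∪ Y) + F(X ∩ Y)` exceeds `F(X) + F(Y)` by the weight of the pairs with one entry in `X \ Y` and
the other in `Y \ X`.
-/

/-- A function on a lattice is supermodular if `f a + f b ≤ f (a ⊔ b) + f (a ⊓ b)`. On the finite
subsets of a type this is the lattice form of the condition on marginal gains, from which
`IsSupermodular.insert_sub_le_insert_insert_sub` recovers the latter. -/
def IsSupermodular {α M : Type*} [Lattice α] [Add M] [LE M] (f : α → M) : Prop :=
  ∀ a b, f a + f b ≤ f (a ⊔ b) + f (a ⊓ b)

theorem IsSupermodular.insert_sub_le_insert_insert_sub {ι M : Type*} [DecidableEq ι]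
    [AddCommGroup M] [LE M] [AddLeftMono M] {f : Finset ι → M} (hf : IsSupermodular f)
    (s : Finset ι) {x y : ι} (hxy : x ≠ y) :
    f (insert x s) - f s ≤ f (insert y (insert x s)) - f (insert y s) := by
  have h_sup : insert x s ⊔ insert y s = insert y (insert x s) := by grind
  have h_inf : insert x s ⊓ insert y s = s := by grind
  rw [sub_le_sub_iff, ← h_sup]
  simpa only [h_inf] using hf (insert x s) (insert y s)

/-- The total weight of the ordered pairs, diagonal included, of elements of `s`. The frame
potential is the case of the weight `w j l = |⟨u_j, u_l⟩|²`. -/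
def pairSum {ι M : Type*} [AddCommMonoid M] (w : ι → ι → M) (s : Finset ι) : M :=
  ∑ i ∈ s, ∑ j ∈ s, w i j

section PairSum

variable {ι M : Type*} [AddCommMonoid M] {w : ι → ι → M}

theorem pairSum_empty : pairSum w ∅ = 0 :=
  Finset.sum_empty

theorem pairSum_eq_sum_product (s : Finset ι) : pairSum w s = ∑ p ∈ s ×ˢ s, w p.1 p.2 :=
  (Finset.sum_product' s s w).symm

variable [PartialOrder M] [IsOrderedAddMonoid M]

theorem pairSum_mono (hw : ∀ i j, 0 ≤ w i j) : Monotone (pairSum w) := by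
  intro s t hst
  simp only [pairSum_eq_sum_product]
  exact Finset.sum_le_sum_of_subset_of_nonneg (Finset.product_subset_product hst hst)
    fun p _ _ ↦ hw p.1 p.2

theorem isSupermodular_pairSum [DecidableEq ι] (hw : ∀ i j, 0 ≤ w i j) :
    IsSupermodular (pairSum w) := by
  intro s t
  have h_union : s ×ˢ s ∪ t ×ˢ t ⊆ (s ∪ t) ×ˢ (s ∪ t) :=
    Finset.union_subset
      (Finset.product_subset_product Finset.subset_union_left Finset.subset_union_left)
      (Finset.product_subset_product Finset.subset_union_right Finset.subset_union_right)
  simp only [pairSum_eq_sum_product, Finset.sup_eq_union, Finset.inf_eq_inter]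
  calc ∑ p ∈ s ×ˢ s, w p.1 p.2 + ∑ p ∈ t ×ˢ t, w p.1 p.2
      = ∑ p ∈ s ×ˢ s ∪ t ×ˢ t, w p.1 p.2 + ∑ p ∈ (s ∩ t) ×ˢ (s ∩ t), w p.1 p.2 := by
        rw [← Finset.product_inter_product, Finset.sum_union_inter]
    _ ≤ ∑ p ∈ (s ∪ t) ×ˢ (s ∪ t), w p.1 p.2 + ∑ p ∈ (s ∩ t) ×ˢ (s ∩ t), w p.1 p.2 := by
        gcongr
        exact fun p _ _ ↦ hw p.1 p.2

theorem frameSetFun_normalized_monotone_supermodular_general [DecidableEq ι]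
    (hw : ∀ i j, 0 ≤ w i j) :
    pairSum w ∅ = 0 ∧ Monotone (pairSum w) ∧ IsSupermodular (pairSum w) :=
  ⟨pairSum_empty, pairSum_mono hw, isSupermodular_pairSum hw⟩

end PairSum

/-- The frame potential set function is normalized, monotone non-decreasing,
and supermodular. -/
theorem frameSetFun_normalized_monotone_supermodular (N K : ℕ)
    (U : Matrix (Fin N) (Fin K) ℂ) :
    frameSetFun U ∅ = 0 ∧
    (∀ (X : Finset (Fin N)) (x : Fin N),
      frameSetFun U X ≤ frameSetFun U (insert x X)) ∧
    (∀ (X : Finset (Fin N)) (x y : Fin N), x ∉ X → y ∉ X → x ≠ y →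
      frameSetFun U (insert x X) - frameSetFun U X ≤
        frameSetFun U (insert y (insert x X)) - frameSetFun U (insert y X)) := by
  obtain ⟨h_empty, h_mono, h_super⟩ := frameSetFun_normalized_monotone_supermodular_general
    (w := fun j l ↦ ‖∑ k, star (U j k) * U l k‖ ^ 2) fun _ _ ↦ sq_nonneg _
  exact ⟨h_empty, fun X x ↦ h_mono (Finset.subset_insert x X),
    fun X x y _ _ hxy ↦ h_super.insert_sub_le_insert_insert_sub X hxy⟩
end

section
/- Let R ≥ 1 and for each i = 1,…,R let U_i ∈ ℂ^{N_i×K} (all with K columns). For A ⊆ {1,…,N_i} let T_i(A) = ∑_{j∈A} u_{i,j}^H u_{i,j} be the K × K Grammian of the rows of U_i indexed by A. Let 𝒩 be the disjoint union of the sets 𝒩_i = {1,…,N_i}, and for S ⊆ 𝒩 write S_i = S ∩ 𝒩_i. Define Q(S) = ‖T_1(𝒩_1) ∘ ⋯ ∘ T_R(𝒩_R)‖_F² − ‖T_1(𝒩_1∖S_1) ∘ ⋯ ∘ T_R(𝒩_R∖S_R)‖_F². Then Q is normalized (Q(∅) = 0) and monotone non-decreasing: Q(S) ≤ Q(S ∪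 {x}) for every S ⊆ 𝒩 and x ∈ 𝒩 ∖ S. -/
open scoped BigOperators

/-- The `K × K` Grammian of the rows of `U` indexed by `A`:
`T(A) = ∑_{j∈A} u_jᴴ u_j`. -/
noncomputable def gram {n K : ℕ} (U : Matrix (Fin n) (Fin K) ℂ)
    (A : Finset (Fin n)) : Matrix (Fin K) (Fin K) ℂ :=
  Matrix.of fun a b => ∑ j ∈ A, star (U j a) * U j b

/-- `Q(S) = ‖T_1(𝒩_1) ∘ ⋯ ∘ T_R(𝒩_R)‖_F² − ‖T_1(𝒩_1∖S_1) ∘ ⋯ ∘ T_R(𝒩_R∖S_R)‖_F²`,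
where the ground set `𝒩` is the disjoint union of the per-domain index sets
`𝒩_i` (modeled by a sigma type) and `S_i` is the part of `S` in domain `i`. -/
noncomputable def Q {R : ℕ} {N : Fin R → ℕ} {K : ℕ}
    (U : ∀ i, Matrix (Fin (N i)) (Fin K) ℂ)
    (S : Finset (Σ i : Fin R, Fin (N i))) : ℝ :=
  (∑ a, ∑ b, ‖∏ i, gram (U i) Finset.univ a b‖ ^ 2) -
    ∑ a, ∑ b, ‖∏ i, gram (U i)
      (Finset.univ.filter fun j : Fin (N i) => (⟨i, j⟩ : Σ i, Fin (N i)) ∉ S) a b‖ ^ 2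

/-!
The Hadamard product of the Grammians `Uᵢᴴ Uᵢ` is the Grammian `Ψᴴ Ψ` of the row-wise Khatri–Rao
product `Ψ`, whose rows are indexed by tuples with one row index per domain. Since
`‖Ψᴴ Ψ‖_F = ‖Ψ Ψᴴ‖_F`, and discarding rows of `Ψ` passes to a principal submatrix of `Ψ Ψᴴ`,
shrinking the index sets decreases the Frobenius norm.
-/

section FrobeniusNorm

open scoped Matrix Matrix.Norms.Frobenius

variable {l m n o α 𝕜 : Type*} [Fintype l] [Fintype m] [Fintype n] [Fintype o] [RCLike 𝕜]

theorem frobenius_norm_sq [SeminormedAddCommGroup α] (A : Matrix m n α) :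
    ‖A‖ ^ 2 = ∑ i, ∑ j, ‖A i j‖ ^ 2 := by
  have sum_sq_nonneg : 0 ≤ ∑ i, ∑ j, ‖A i j‖ ^ 2 := by positivity
  simp only [Matrix.frobenius_norm_def, Real.rpow_two, ← Real.sqrt_eq_rpow,
    Real.sq_sqrt sum_sq_nonneg]

theorem frobenius_norm_sq_eq_trace (A : Matrix m n 𝕜) :
    ((‖A‖ ^ 2 : ℝ) : 𝕜) = (A * Aᴴ).trace := by
  simp [frobenius_norm_sq, Matrix.trace, Matrix.mul_apply, RCLike.mul_conj]

theorem frobenius_norm_conjTranspose_mul_self (A : Matrix m n 𝕜) : ‖Aᴴ * A‖ = ‖A * Aᴴ‖ := by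
  have trace_eq : ((Aᴴ * A) * (Aᴴ * A)ᴴ).trace = ((A * Aᴴ) * (A * Aᴴ)ᴴ).trace := by
    simp only [Matrix.conjTranspose_mul, Matrix.conjTranspose_conjTranspose]
    rw [Matrix.mul_assoc, Matrix.trace_mul_comm]
    simp only [Matrix.mul_assoc]
  have norm_sq_eq : ‖Aᴴ * A‖ ^ 2 = ‖A * Aᴴ‖ ^ 2 := by
    simpa only [← frobenius_norm_sq_eq_trace, RCLike.ofReal_inj] using trace_eq
  exact (sq_eq_sq₀ (norm_nonneg _) (norm_nonneg _)).mp norm_sq_eq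

theorem frobenius_norm_submatrix_le [SeminormedAddCommGroup α] (A : Matrix m n α)
    {r : l → m} {c : o → n} (hr : r.Injective) (hc : c.Injective) :
    ‖A.submatrix r c‖ ≤ ‖A‖ := by
  refine le_of_sq_le_sq ?_ (norm_nonneg _)
  let e : l × o ↪ m × n := ⟨Prod.map r c, hr.prodMap hc⟩
  simp only [frobenius_norm_sq, ← Fintype.sum_prod_type']
  calc ∑ p : l × o, ‖A (e p).1 (e p).2‖ ^ 2
      = ∑ q ∈ Finset.univ.map e, ‖A q.1 q.2‖ ^ 2 := by rw [Finset.sum_map]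
    _ ≤ ∑ q : m × n, ‖A q.1 q.2‖ ^ 2 := Finset.sum_le_univ_sum_of_nonneg fun _ => by positivity

theorem frobenius_norm_conjTranspose_mul_self_submatrix_le (A : Matrix m n 𝕜)
    {r : l → m} (hr : r.Injective) :
    ‖(A.submatrix r id)ᴴ * A.submatrix r id‖ ≤ ‖Aᴴ * A‖ := by
  calc ‖(A.submatrix r id)ᴴ * A.submatrix r id‖
      = ‖A.submatrix r id * (A.submatrix r id)ᴴ‖ := frobenius_norm_conjTranspose_mul_self _
    _ = ‖(A * Aᴴ).submatrix r r‖ := by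
        rw [Matrix.conjTranspose_submatrix, ← Matrix.submatrix_mul _ _ r id r Function.bijective_id]
    _ ≤ ‖A * Aᴴ‖ := frobenius_norm_submatrix_le _ hr hr
    _ = ‖Aᴴ * A‖ := (frobenius_norm_conjTranspose_mul_self A).symm

end FrobeniusNorm

section KhatriRao

open scoped Matrix Matrix.Norms.Frobenius

variable {ι n p α 𝕜 : Type*} {l m : ι → Type*} [Fintype ι]

/-- The Hadamard product `A₁ ∘ ⋯ ∘ A_R` of a finite family of matrices, as it occurs
inside the Frobenius norms defining `Q`. -/
def hadamardProd [CommMonoid α] (A : ι → Matrix n p α) : Matrix n p α :=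
  Matrix.of fun a b => ∏ i, A i a b

/-- The row-wise Khatri–Rao (face-splitting) product of a finite family of matrices with the same
columns: its row at the tuple `f` is the entrywise product of the rows `f i` of the `V i`. It
exhibits a Hadamard product of Grammians as a single Grammian. -/
def rowKhatriRao [CommMonoid α] (V : ∀ i, Matrix (m i) n α) : Matrix (∀ i, m i) n α :=
  Matrix.of fun f a => ∏ i, V i (f i) a

theorem rowKhatriRao_submatrix [CommMonoid α] (V : ∀ i, Matrix (m i) n α) (r : ∀ i, l i → m i) :
    rowKhatriRao (fun i => (V i).submatrix (r i) id) =
      (rowKhatriRao V).submatrix (Pi.map r) id :=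
  rfl

theorem conjTranspose_rowKhatriRao_mul_self [CommSemiring α] [StarMul α] [DecidableEq ι]
    [∀ i, Fintype (m i)] (V : ∀ i, Matrix (m i) n α) :
    (rowKhatriRao V)ᴴ * rowKhatriRao V = hadamardProd fun i => (V i)ᴴ * V i := by
  ext a b
  simp only [rowKhatriRao, hadamardProd, Matrix.mul_apply, Matrix.conjTranspose_apply,
    Matrix.of_apply, Fintype.prod_sum, Finset.prod_mul_distrib, star_prod]

theorem frobenius_norm_hadamardProd_submatrix_le [RCLike 𝕜] [Fintype n]
    [∀ i, Fintype (l i)] [∀ i, Fintype (m i)] (V : ∀ i, Matrix (m i) n 𝕜)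
    {r : ∀ i, l i → m i} (hr : ∀ i, (r i).Injective) :
    ‖hadamardProd fun i => ((V i).submatrix (r i) id)ᴴ * (V i).submatrix (r i) id‖ ≤
      ‖hadamardProd fun i => (V i)ᴴ * V i‖ := by
  classical
  simp only [← conjTranspose_rowKhatriRao_mul_self, rowKhatriRao_submatrix]
  exact frobenius_norm_conjTranspose_mul_self_submatrix_le _ (Function.Injective.piMap hr)

end KhatriRao

section Grammian

open scoped Matrix Matrix.Norms.Frobenius

variable {R K : ℕ} {N : Fin R → ℕ}

theorem gram_eq_conjTranspose_mul_self {n : ℕ} (U : Matrix (Fin n) (Fin K) ℂ)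
    (A : Finset (Fin n)) :
    gram U A = (U.submatrix ((↑) : A → Fin n) id)ᴴ * U.submatrix ((↑) : A → Fin n) id := by
  ext a b
  simp only [gram, Matrix.of_apply, Matrix.mul_apply, Matrix.conjTranspose_apply,
    Matrix.submatrix_apply, id_eq]
  exact (Finset.sum_coe_sort A fun j => star (U j a) * U j b).symm

theorem monotone_frobenius_norm_hadamardProd_gram (U : ∀ i, Matrix (Fin (N i)) (Fin K) ℂ) :
    Monotone fun A : ∀ i, Finset (Fin (N i)) => ‖hadamardProd fun i => gram (U i) (A i)‖ := by
  intro A B hAB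
  simp only [gram_eq_conjTranspose_mul_self]
  exact frobenius_norm_hadamardProd_submatrix_le
    (fun i => (U i).submatrix ((↑) : B i → Fin (N i)) id)
    (r := fun i => Subtype.map id (hAB i))
    fun i => Subtype.map_injective (hAB i) Function.injective_id

theorem Q_eq_frobenius_norm_sq_sub (U : ∀ i, Matrix (Fin (N i)) (Fin K) ℂ)
    (S : Finset (Σ i : Fin R, Fin (N i))) :
    Q U S = ‖hadamardProd fun i => gram (U i) Finset.univ‖ ^ 2 -
      ‖hadamardProd fun i => gram (U i) {j | (⟨i, j⟩ : Σ i, Fin (N i)) ∉ S}‖ ^ 2 := by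
  simp only [Q, hadamardProd, frobenius_norm_sq, Matrix.of_apply]

theorem monotone_Q (U : ∀ i, Matrix (Fin (N i)) (Fin K) ℂ) : Monotone (Q U) := by
  intro S T hST
  simp only [Q_eq_frobenius_norm_sq_sub]
  have remaining_subset (i : Fin R) :
      (Finset.univ.filter fun j : Fin (N i) => (⟨i, j⟩ : Σ i, Fin (N i)) ∉ T) ⊆
        Finset.univ.filter fun j : Fin (N i) => (⟨i, j⟩ : Σ i, Fin (N i)) ∉ S :=
    Finset.monotone_filter_right _ fun _ _ hT hS => hT (hST hS)
  gcongr
  exact monotone_frobenius_norm_hadamardProd_gram U remaining_subset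

end Grammian

/-- `Q` is normalized and monotone non-decreasing. -/
theorem Q_normalized_monotone (R : ℕ) (hR : 1 ≤ R) (N : Fin R → ℕ) (K : ℕ)
    (U : ∀ i, Matrix (Fin (N i)) (Fin K) ℂ) :
    Q U ∅ = 0 ∧
    (∀ (S : Finset (Σ i : Fin R, Fin (N i))) (x : Σ i : Fin R, Fin (N i)),
      x ∉ S → Q U S ≤ Q U (insert x S)) := by
  constructor
  · simp [Q]
  · intro S x _
    exact monotone_Q U (Finset.subset_insert x S)
end

section
/- Let R ≥ 1 and for each i = 1,…,R let U_i ∈ ℂ^{N_i×K} (all with K columns). For A ⊆ {1,…,N_i} let T_i(A) = ∑_{j∈A} u_{i,j}^H u_{i,j} be the K × K Grammian of the rows of U_i indexed by A. Let 𝒩 be the disjoint union of the sets 𝒩_i = {1,…,N_i}, and for S ⊆ 𝒩 write S_i = S ∩ 𝒩_i. Define Q(S) = ‖T_1(𝒩_1) ∘ ⋯ ∘ T_R(𝒩_R)‖_F² − ‖T_1(𝒩_1∖S_1) ∘ ⋯ ∘ T_R(𝒩_R∖S_R)‖_F². Then Q is submodular: for every S ⊆ 𝒩 and distinct x, y ∈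 𝒩 ∖ S, Q(S ∪ {x}) − Q(S) ≥ Q(S ∪ {x,y}) − Q(S ∪ {y}). -/
open scoped BigOperators

/-!
Expanding the Hadamard product of Grammians over all selections `f` of one row per domain writes it
as `∑ f, v_fᴴ v_f`, where `v_f` is the entrywise product of the selected rows. Cyclicity of the
trace turns its squared Frobenius norm into `∑ f g, ‖⟪v_f, v_g⟫‖ ^ 2`. Removing the rows in `S`
deletes exactly the pairs `(f, g)` for which `f` or `g` selects a row of `S`, so `Q S` is the total
weight `‖⟪v_f, v_g⟫‖ ^ 2` of these pairs: a weighted coverage function with nonnegative weights,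
hence submodular.
-/

section Coverage

variable {α κ M : Type*} [DecidableEq α] [Fintype κ] [AddCommMonoid M]

/-- The weighted coverage function of a family of finite sets: `coverage E w S` is the total weight
of the members of the family `E` that meet `S`. -/
def coverage (E : κ → Finset α) (w : κ → M) (S : Finset α) : M :=
  ∑ k with ¬Disjoint (E k) S, w k

lemma coverage_union_add_coverage_inter_le [PartialOrder M] [IsOrderedAddMonoid M]
    (E : κ → Finset α) {w : κ → M} (hw : 0 ≤ w) (S T : Finset α) :
    coverage E w (S ∪ T) + coverage E w (S ∩ T) ≤ coverage E w S + coverage E w T := by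
  classical
  let meeting (A : Finset α) : Finset κ := {k | ¬Disjoint (E k) A}
  have meeting_union : meeting (S ∪ T) = meeting S ∪ meeting T := by
    simp only [meeting, Finset.disjoint_union_right, not_and_or, Finset.filter_or]
  have meeting_inter : meeting (S ∩ T) ⊆ meeting S ∩ meeting T :=
    Finset.subset_inter
      (Finset.monotone_filter_right _ fun _ _ h hS => h (hS.mono_right Finset.inter_subset_left))
      (Finset.monotone_filter_right _ fun _ _ h hT => h (hT.mono_right Finset.inter_subset_right))
  calc ∑ k ∈ meeting (S ∪ T), w k + ∑ k ∈ meeting (S ∩ T), w k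
      ≤ ∑ k ∈ meeting S ∪ meeting T, w k + ∑ k ∈ meeting S ∩ meeting T, w k := by
        rw [meeting_union]
        gcongr
        exact fun k _ _ => hw k
    _ = ∑ k ∈ meeting S, w k + ∑ k ∈ meeting T, w k := Finset.sum_union_inter

end Coverage

section Frobenius

open scoped Matrix

variable {𝕜 m n : Type*} [RCLike 𝕜] [Fintype n]

lemma sum_norm_sq_eq_trace_mul_conjTranspose [Fintype m] (A : Matrix m n 𝕜) :
    ((∑ i, ∑ j, ‖A i j‖ ^ 2 : ℝ) : 𝕜) = (A * Aᴴ).trace := by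
  simp only [Matrix.trace, Matrix.diag_apply, Matrix.mul_apply, Matrix.conjTranspose_apply,
    RCLike.star_def, RCLike.mul_conj, map_sum, map_pow]

lemma sum_norm_sq_conjTranspose_mul_self [Fintype m] (V : Matrix m n 𝕜) :
    ∑ a, ∑ b, ‖(Vᴴ * V) a b‖ ^ 2 = ∑ i, ∑ j, ‖(V * Vᴴ) i j‖ ^ 2 := by
  apply RCLike.ofReal_injective (K := 𝕜)
  calc ((∑ a, ∑ b, ‖(Vᴴ * V) a b‖ ^ 2 : ℝ) : 𝕜)
      = (Vᴴ * (V * (Vᴴ * V))).trace := by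
        rw [sum_norm_sq_eq_trace_mul_conjTranspose, Matrix.conjTranspose_mul,
          Matrix.conjTranspose_conjTranspose, Matrix.mul_assoc]
    _ = (V * (Vᴴ * V) * Vᴴ).trace := Matrix.trace_mul_comm _ _
    _ = ((∑ i, ∑ j, ‖(V * Vᴴ) i j‖ ^ 2 : ℝ) : 𝕜) := by
        rw [sum_norm_sq_eq_trace_mul_conjTranspose, Matrix.conjTranspose_mul,
          Matrix.conjTranspose_conjTranspose]
        simp only [Matrix.mul_assoc]

lemma sum_norm_sq_sum_star_mul (V : Matrix m n 𝕜) (s : Finset m) :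
    ∑ a, ∑ b, ‖∑ i ∈ s, star (V i a) * V i b‖ ^ 2 =
      ∑ p ∈ s ×ˢ s, ‖(V * Vᴴ) p.1 p.2‖ ^ 2 := by
  simp only [Finset.sum_product, ← Finset.sum_coe_sort s]
  exact sum_norm_sq_conjTranspose_mul_self (V.submatrix ((↑) : s → m) id)

end Frobenius

/-- The (columnwise) Khatri–Rao product of matrices sharing the column index: column `a` of the
product is the Kronecker product of the columns `a` of the factors, with rows indexed by choices of
one row in each factor. -/
def khatriRao {ι n α : Type*} {m : ι → Type*} [Fintype ι] [CommMonoid α]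
    (U : ∀ i, Matrix (m i) n α) : Matrix (∀ i, m i) n α :=
  Matrix.of fun f a => ∏ i, U i (f i) a

section SelectedRows

variable {ι : Type*} {m : ι → Type*} [Fintype ι] [∀ i, DecidableEq (m i)]

/-- The elements of the ground set `Σ i, m i` picked by at least one of two selections `p.1`, `p.2`
of a row from each domain. -/
def selectedRows (p : (∀ i, m i) × (∀ i, m i)) : Finset (Σ i, m i) :=
  Finset.univ.sigma fun i => {p.1 i, p.2 i}

lemma disjoint_selectedRows_iff {p : (∀ i, m i) × (∀ i, m i)} {S : Finset (Σ i, m i)} :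
    Disjoint (selectedRows p) S ↔ (∀ i, ⟨i, p.1 i⟩ ∉ S) ∧ ∀ i, ⟨i, p.2 i⟩ ∉ S := by
  simp [selectedRows, Finset.disjoint_left, Sigma.forall, or_imp, forall_and]

end SelectedRows

section Grammians

open scoped Matrix

variable {R : ℕ} {N : Fin R → ℕ} {K : ℕ}

lemma prod_gram_apply (U : ∀ i, Matrix (Fin (N i)) (Fin K) ℂ) (A : ∀ i, Finset (Fin (N i)))
    (a b : Fin K) :
    ∏ i, gram (U i) (A i) a b =
      ∑ f ∈ Fintype.piFinset A, star (khatriRao U f a) * khatriRao U f b := by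
  simp only [gram, khatriRao, Matrix.of_apply, Finset.prod_univ_sum, Finset.prod_mul_distrib,
    star_prod]

lemma Q_eq_coverage (U : ∀ i, Matrix (Fin (N i)) (Fin K) ℂ) :
    Q U = coverage selectedRows fun p => ‖(khatriRao U * (khatriRao U)ᴴ) p.1 p.2‖ ^ 2 := by
  ext S
  have avoiding_eq :
      (Fintype.piFinset fun i => {j | (⟨i, j⟩ : Σ i, Fin (N i)) ∉ S}) ×ˢ
        (Fintype.piFinset fun i => {j | (⟨i, j⟩ : Σ i, Fin (N i)) ∉ S}) =
      ({p | Disjoint (selectedRows p) S} : Finset _) := by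
    ext p
    simp only [Finset.mem_product, Fintype.mem_piFinset, Finset.mem_filter_univ,
      disjoint_selectedRows_iff]
  simp only [Q, prod_gram_apply, sum_norm_sq_sum_star_mul, avoiding_eq, Fintype.piFinset_univ,
    Finset.univ_product_univ, coverage]
  exact sub_eq_of_eq_add' (Finset.sum_filter_add_sum_filter_not _ _ _).symm

lemma Q_union_add_Q_inter_le (U : ∀ i, Matrix (Fin (N i)) (Fin K) ℂ)
    (S T : Finset (Σ i, Fin (N i))) :
    Q U (S ∪ T) + Q U (S ∩ T) ≤ Q U S + Q U T := by
  rw [Q_eq_coverage]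
  exact coverage_union_add_coverage_inter_le _ (fun _ => sq_nonneg _) S T

end Grammians

/-- `Q` is submodular. -/
theorem Q_submodular (R : ℕ) (hR : 1 ≤ R) (N : Fin R → ℕ) (K : ℕ)
    (U : ∀ i, Matrix (Fin (N i)) (Fin K) ℂ) :
    ∀ (S : Finset (Σ i : Fin R, Fin (N i))) (x y : Σ i : Fin R, Fin (N i)),
      x ∉ S → y ∉ S → x ≠ y →
      Q U (insert x S) - Q U S ≥
        Q U (insert y (insert x S)) - Q U (insert y S) := by
  intro S x y hx _ hxy
  have inter_eq : insert x S ∩ insert y S = S := by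
    rw [Finset.insert_inter_of_notMem (by simp [hxy, hx]),
      Finset.inter_eq_left.mpr (Finset.subset_insert y S)]
  have union_eq : insert x S ∪ insert y S = insert y (insert x S) := by
    rw [Finset.union_insert, Finset.union_eq_left.mpr (Finset.subset_insert x S)]
  have h := Q_union_add_Q_inter_le U (insert x S) (insert y S)
  rw [inter_eq, union_eq] at h
  linarith
end
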